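/- The function α is strictly increasing in each variable on the positive quadrant: for all real y > 0 and 0 < x₁ < x₂ one has α(x₁,y) < α(x₂,y), and for all real x > 0 and 0 < y₁ < y₂ one has α(x,y₁) < α(x,y₂). -/

import Mathlib

/-- The auxiliary function `α(x,y) = -d₁(x,y)/d₀(x,y)` of the BDF3 analysis. -/
noncomputable def alphaF (x y : ℝ) : ℝ :=
  x*(x^2*y^2 + 4*x*y^2 + 3*y^2 + 2*x*y + 3*y + 1) /
    ((y + 1)*(3*x^2*y + 4*x*y + 2*x + y + 1))

/-!
A quotient `(∑ aᵢ xⁱ) / (∑ bᵢ xⁱ)` with nonnegative `bᵢ` increases on the positive axis as soon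
as the ratios `aᵢ / bᵢ` increase with `i` (Biernacki–Krzyż): by the Binet–Cauchy identity, the
cross difference of its values at two points is a sum of products of `2 × 2` minors, one factor
from the coefficients and the other from the powers, and both factors have the same sign.
As a rational function of either variable, `α` has increasing coefficient ratios. They are compared
after cross-multiplication, so that a coefficient `bᵢ = 0` with `aᵢ > 0` counts as ratio `∞`.
-/

theorem two_mul_sum_mul_sum_sub_sum_mul_sum {ι R : Type*} [CommRing R] (s : Finset ι)
    (a b u v : ι → R) :
    2 * ((∑ i ∈ s, a i * u i) * (∑ i ∈ s, b i * v i) -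
        (∑ i ∈ s, a i * v i) * (∑ i ∈ s, b i * u i)) =
      ∑ i ∈ s, ∑ j ∈ s, (a i * b j - a j * b i) * (u i * v j - u j * v i) := by
  let f i j := a i * b j * (u i * v j - u j * v i)
  have diff_eq : (∑ i ∈ s, a i * u i) * (∑ i ∈ s, b i * v i) -
      (∑ i ∈ s, a i * v i) * (∑ i ∈ s, b i * u i) = ∑ i ∈ s, ∑ j ∈ s, f i j := by
    simp only [Finset.sum_mul_sum, ← Finset.sum_sub_distrib]
    exact Finset.sum_congr rfl fun i _ ↦ Finset.sum_congr rfl fun j _ ↦ by ring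
  calc
    _ = ∑ i ∈ s, ∑ j ∈ s, f i j + ∑ i ∈ s, ∑ j ∈ s, f j i := by
      rw [diff_eq, two_mul, Finset.sum_comm (f := fun i j ↦ f j i)]
    _ = _ := by
      simp only [← Finset.sum_add_distrib]
      exact Finset.sum_congr rfl fun i _ ↦ Finset.sum_congr rfl fun j _ ↦ by ring

theorem sum_mul_sum_lt_sum_mul_sum_of_cross_mul {ι R : Type*} [LinearOrder ι] [CommRing R]
    [LinearOrder R] [IsStrictOrderedRing R] {s : Finset ι} {a b u v : ι → R}
    (hab : ∀ i ∈ s, ∀ j ∈ s, i < j → a i * b j ≤ a j * b i)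
    (huv : ∀ i ∈ s, ∀ j ∈ s, i < j → u i * v j < u j * v i)
    (hlt : ∃ i ∈ s, ∃ j ∈ s, i < j ∧ a i * b j < a j * b i) :
    (∑ i ∈ s, a i * v i) * (∑ i ∈ s, b i * u i) <
      (∑ i ∈ s, a i * u i) * (∑ i ∈ s, b i * v i) := by
  have minors_nonneg : ∀ i ∈ s, ∀ j ∈ s,
      0 ≤ (a i * b j - a j * b i) * (u i * v j - u j * v i) := by
    intro i hi j hj
    rcases lt_trichotomy i j with hij | rfl | hji
    · exact mul_nonneg_of_nonpos_of_nonpos (sub_nonpos.2 (hab i hi j hj hij))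
        (sub_nonpos.2 (huv i hi j hj hij).le)
    · simp
    · exact mul_nonneg (sub_nonneg.2 (hab j hj i hi hji)) (sub_nonneg.2 (huv j hj i hi hji).le)
  obtain ⟨i, hi, j, hj, hij, hab_lt⟩ := hlt
  have minor_pos : 0 < (a i * b j - a j * b i) * (u i * v j - u j * v i) :=
    mul_pos_of_neg_of_neg (sub_neg.2 hab_lt) (sub_neg.2 (huv i hi j hj hij))
  have sum_pos : 0 < ∑ i ∈ s, ∑ j ∈ s, (a i * b j - a j * b i) * (u i * v j - u j * v i) :=
    Finset.sum_pos' (fun i hi ↦ Finset.sum_nonneg (minors_nonneg i hi))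
      ⟨i, hi, Finset.sum_pos' (minors_nonneg i hi) ⟨j, hj, minor_pos⟩⟩
  rw [← two_mul_sum_mul_sum_sub_sum_mul_sum] at sum_pos
  exact sub_pos.1 (pos_of_mul_pos_right sum_pos zero_le_two)

theorem pow_mul_pow_lt_pow_mul_pow {R : Type*} [CommSemiring R] [PartialOrder R]
    [IsStrictOrderedRing R] {x y : R} (hx : 0 < x) (hxy : x < y) {i j : ℕ} (hij : i < j) :
    y ^ i * x ^ j < y ^ j * x ^ i := by
  obtain ⟨k, rfl⟩ := Nat.exists_eq_add_of_lt hij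
  have hy : 0 < y := hx.trans hxy
  calc y ^ i * x ^ (i + k + 1) = y ^ i * x ^ i * x ^ (k + 1) := by ring
    _ < y ^ i * x ^ i * y ^ (k + 1) := by gcongr
    _ = y ^ (i + k + 1) * x ^ i := by ring

theorem strictMonoOn_sum_mul_pow_div_sum_mul_pow {K : Type*} [Field K] [LinearOrder K]
    [IsStrictOrderedRing K] {n : ℕ} {a b : Fin n → K} (hb : 0 < b)
    (hab : ∀ i j, i < j → a i * b j ≤ a j * b i)
    (hlt : ∃ i j, i < j ∧ a i * b j < a j * b i) :
    StrictMonoOn (fun x ↦ (∑ i, a i * x ^ (i : ℕ)) / ∑ i, b i * x ^ (i : ℕ)) (Set.Ioi 0) := by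
  have denom_pos : ∀ x ∈ Set.Ioi (0 : K), 0 < ∑ i, b i * x ^ (i : ℕ) := by
    intro x hx
    obtain ⟨hb_nonneg, k, hbk⟩ := Pi.lt_def.1 hb
    exact Finset.sum_pos' (fun i _ ↦ mul_nonneg (hb_nonneg i) (pow_pos hx _).le)
      ⟨k, Finset.mem_univ k, mul_pos hbk (pow_pos hx _)⟩
  intro x hx y hy hxy
  refine (div_lt_div_iff₀ (denom_pos x hx) (denom_pos y hy)).2 ?_
  exact sum_mul_sum_lt_sum_mul_sum_of_cross_mul (fun i _ j _ ↦ hab i j)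
    (fun i _ j _ hij ↦ pow_mul_pow_lt_pow_mul_pow hx hxy hij) (by simpa using hlt)

theorem alphaF_eq_inv_mul_sum_pow_fst_div (x y : ℝ) :
    alphaF x y = (y + 1)⁻¹ *
      ((∑ i, ![0, 3 * y ^ 2 + 3 * y + 1, y * (4 * y + 2), y ^ 2] i * x ^ (i : ℕ)) /
        ∑ i, ![y + 1, 4 * y + 2, 3 * y, 0] i * x ^ (i : ℕ)) := by
  rw [alphaF, mul_comm (y + 1), ← div_div, inv_mul_eq_div]
  simp only [Fin.sum_univ_four, Matrix.cons_val, Fin.coe_ofNat_eq_mod]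
  congr 2 <;> ring

theorem alphaF_eq_mul_sum_pow_snd_div (x y : ℝ) :
    alphaF x y = x *
      ((∑ i, ![1, 2 * x + 3, (x + 1) * (x + 3)] i * y ^ (i : ℕ)) /
        ∑ i, ![2 * x + 1, 3 * x ^ 2 + 6 * x + 2, (x + 1) * (3 * x + 1)] i * y ^ (i : ℕ)) := by
  rw [alphaF, mul_div_assoc]
  simp only [Fin.sum_univ_three, Matrix.cons_val, Fin.coe_ofNat_eq_mod]
  congr 2 <;> ring

theorem strictMonoOn_alphaF_fst {y : ℝ} (hy : 0 ≤ y) :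
    StrictMonoOn (fun x ↦ alphaF x y) (Set.Ioi 0) := by
  have denom_pos : 0 < ![y + 1, 4 * y + 2, 3 * y, 0] :=
    Pi.lt_def.2 ⟨fun i ↦ by fin_cases i <;> dsimp <;> positivity, 0, by dsimp; positivity⟩
  have ratio_zero_lt_one : 0 < (3 * y ^ 2 + 3 * y + 1) * (y + 1) := by positivity
  have ratio_one_le_two :
      (3 * y ^ 2 + 3 * y + 1) * (3 * y) ≤ y * (4 * y + 2) * (4 * y + 2) := by
    have : 0 ≤ y * (7 * y ^ 2 + 7 * y + 1) := by positivity
    linarith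
  intro x₁ hx₁ x₂ hx₂ hx
  simp only [alphaF_eq_inv_mul_sum_pow_fst_div]
  refine mul_lt_mul_of_pos_left (strictMonoOn_sum_mul_pow_div_sum_mul_pow denom_pos ?_
    ⟨0, 1, Fin.zero_lt_one, by simpa using ratio_zero_lt_one⟩ hx₁ hx₂ hx) (by positivity)
  simpa [Fin.forall_fin_succ] using
    ⟨⟨by positivity, by positivity, by positivity⟩, ⟨ratio_one_le_two, by positivity⟩,
      by positivity⟩

theorem strictMonoOn_alphaF_snd {x : ℝ} (hx : 0 < x) :
    StrictMonoOn (fun y ↦ alphaF x y) (Set.Ioi 0) := by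
  have denom_pos : 0 < ![2 * x + 1, 3 * x ^ 2 + 6 * x + 2, (x + 1) * (3 * x + 1)] :=
    Pi.lt_def.2 ⟨fun i ↦ by fin_cases i <;> dsimp <;> positivity, 0, by dsimp; positivity⟩
  have ratio_zero_lt_one : 3 * x ^ 2 + 6 * x + 2 < (2 * x + 3) * (2 * x + 1) := by
    have : 0 < (x + 1) ^ 2 := by positivity
    linarith
  have ratio_zero_le_two : (x + 1) * (3 * x + 1) ≤ (x + 1) * (x + 3) * (2 * x + 1) := by
    have : 0 ≤ 2 * (x + 1) ^ 3 := by positivity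
    linarith
  have ratio_one_le_two : (2 * x + 3) * ((x + 1) * (3 * x + 1)) ≤
      (x + 1) * (x + 3) * (3 * x ^ 2 + 6 * x + 2) := by
    have : 0 ≤ 3 * (x + 1) ^ 4 := by positivity
    linarith
  intro y₁ hy₁ y₂ hy₂ hy
  simp only [alphaF_eq_mul_sum_pow_snd_div]
  refine mul_lt_mul_of_pos_left (strictMonoOn_sum_mul_pow_div_sum_mul_pow denom_pos ?_
    ⟨0, 1, Fin.zero_lt_one, by simpa using ratio_zero_lt_one⟩ hy₁ hy₂ hy) hx
  simpa [Fin.forall_fin_succ] using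
    ⟨⟨ratio_zero_lt_one.le, ratio_zero_le_two⟩, ratio_one_le_two⟩

/-- The function `α` is strictly increasing in each variable on the positive quadrant. -/
theorem alpha_strict_mono :
    (∀ y x₁ x₂ : ℝ, 0 < y → 0 < x₁ → x₁ < x₂ → alphaF x₁ y < alphaF x₂ y) ∧
    (∀ x y₁ y₂ : ℝ, 0 < x → 0 < y₁ → y₁ < y₂ → alphaF x y₁ < alphaF x y₂) :=
  ⟨fun _ _ _ hy hx₁ hx ↦ strictMonoOn_alphaF_fst hy.le hx₁ (hx₁.trans hx) hx,
    fun _ _ _ hx hy₁ hy ↦ strictMonoOn_alphaF_snd hx hy₁ (hy₁.trans hy) hy⟩
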